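/- Let f : (k+1)^E → ℝ be a monotone k-submodular function, let ε ∈ (0,1) and w ∈ ℝ. Let p, q ∈ (k+1)^E with p ⪯ q, let e, u ∈ E with e ∉ supp(q) and u ∉ supp(q), and let i, i* ∈ {1,…,k}. If Δ_{e,i} f(p) ≥ w and Δ_{u,i*} f(p) < w/(1−ε), then f(q + i*·1_u) − f(q + i·1_e) < (1/(1−ε)) · Δ_{e,i} f(p). -/

import Mathlib

/-- The support of `p : E → Fin (k+1)`: elements assigned a nonzero label. -/
def kSupp {E : Type*} [Fintype E] [DecidableEq E] {k : ℕ}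
    (p : E → Fin (k+1)) : Finset E :=
  Finset.univ.filter (fun e => p e ≠ 0)

/-- The meet `p ⊓ q`. -/
def kInf {E : Type*} {k : ℕ} (p q : E → Fin (k+1)) : E → Fin (k+1) :=
  fun e => if p e = q e then p e else 0

/-- The join `p ⊔ q`. -/
def kSup {E : Type*} {k : ℕ} (p q : E → Fin (k+1)) : E → Fin (k+1) :=
  fun e => if q e = 0 ∨ q e = p e then p e else if p e = 0 then q e else 0

/-- `f` is `k`-submodular. -/
def IsKSubmodular {E : Type*} {k : ℕ} (f : (E → Fin (k+1)) → ℝ) : Prop :=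
  ∀ p q, f (kSup p q) + f (kInf p q) ≤ f p + f q

/-- The partial order `p ⪯ q`. -/
def kLE {E : Type*} {k : ℕ} (p q : E → Fin (k+1)) : Prop :=
  ∀ e, p e ≠ 0 → p e = q e

/-- Marginal gain `Δ_{e,i} f(p) = f(p + i·1_e) − f(p)`. -/
def marg {E : Type*} [DecidableEq E] {k : ℕ}
    (f : (E → Fin (k+1)) → ℝ) (p : E → Fin (k+1)) (e : E) (i : Fin (k+1)) : ℝ :=
  f (Function.update p e i) - f p

/-- Orthant submodularity. -/
def OrthantSubmodular {E : Type*} [DecidableEq E] {k : ℕ}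
    (f : (E → Fin (k+1)) → ℝ) : Prop :=
  ∀ (p q : E → Fin (k+1)) (e : E) (i : Fin (k+1)),
    kLE p q → q e = 0 → i ≠ 0 → marg f q e i ≤ marg f p e i

/-- Pairwise monotonicity. -/
def PairwiseMonotone {E : Type*} [DecidableEq E] {k : ℕ}
    (f : (E → Fin (k+1)) → ℝ) : Prop :=
  ∀ (p : E → Fin (k+1)) (e : E) (i j : Fin (k+1)),
    p e = 0 → i ≠ 0 → j ≠ 0 → i ≠ j → 0 ≤ marg f p e i + marg f p e j

/-- Monotonicity of `f` with respect to `⪯`. -/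
def KMonotone {E : Type*} {k : ℕ} (f : (E → Fin (k+1)) → ℝ) : Prop :=
  ∀ p q, kLE p q → f p ≤ f q

/-!
For `e ∉ supp(q)` and `p ⪯ q`, the join of `p + i·1_e` and `q` is `q + i·1_e` and their meet is
`p`, so `k`-submodularity makes marginal gains decrease along `⪯`. By monotonicity
`f(q + i·1_e) ≥ f(q)`, so the exchange difference is at most `Δ_{u,j} f(q) ≤ Δ_{u,j} f(p)`.
-/

section Labelings

variable {E : Type*} {k : ℕ} {p q : E → Fin (k + 1)}

lemma kLE.kSup_eq_right (hpq : kLE p q) : kSup p q = q := by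
  funext x
  have hx := hpq x
  grind [kSup]

lemma kLE.kInf_eq_left (hpq : kLE p q) : kInf p q = p := by
  funext x
  have hx := hpq x
  grind [kInf]

variable [DecidableEq E] {e : E}

lemma kSup_update_left (p : E → Fin (k + 1)) (he : q e = 0) (i : Fin (k + 1)) :
    kSup (Function.update p e i) q = Function.update (kSup p q) e i := by
  funext x
  obtain rfl | hx := eq_or_ne x e
  · simp [kSup, he]
  · simp [kSup, hx]

lemma kInf_update_left (p : E → Fin (k + 1)) (he : q e = 0) (i : Fin (k + 1)) :
    kInf (Function.update p e i) q = kInf p q := by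
  funext x
  obtain rfl | hx := eq_or_ne x e
  · grind [kInf]
  · simp [kInf, hx]

lemma kLE_update (he : q e = 0) (i : Fin (k + 1)) : kLE q (Function.update q e i) := by
  intro x hx
  have hxe : x ≠ e := by
    rintro rfl
    exact hx he
  rw [Function.update_of_ne hxe]

end Labelings

section MarginalGains

variable {E : Type*} [DecidableEq E] {k : ℕ} {f : (E → Fin (k + 1)) → ℝ}

theorem IsKSubmodular.orthantSubmodular (hf : IsKSubmodular f) : OrthantSubmodular f := by
  intro p q e i hpq he _
  have hsubmod := hf (Function.update p e i) q
  rw [kSup_update_left p he, kInf_update_left p he, hpq.kSup_eq_right, hpq.kInf_eq_left] at hsubmod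
  unfold marg
  linarith

lemma KMonotone.le_update (hmono : KMonotone f) {q : E → Fin (k + 1)} {e : E} (he : q e = 0)
    (i : Fin (k + 1)) : f q ≤ f (Function.update q e i) :=
  hmono _ _ (kLE_update he i)

lemma OrthantSubmodular.update_sub_update_le_marg (hf : OrthantSubmodular f) (hmono : KMonotone f)
    {p q : E → Fin (k + 1)} (hpq : kLE p q) {e u : E} (he : q e = 0) (hu : q u = 0)
    (i : Fin (k + 1)) {j : Fin (k + 1)} (hj : j ≠ 0) :
    f (Function.update q u j) - f (Function.update q e i) ≤ marg f p u j :=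
  calc f (Function.update q u j) - f (Function.update q e i)
      ≤ f (Function.update q u j) - f q := sub_le_sub_left (hmono.le_update he i) _
    _ = marg f q u j := rfl
    _ ≤ marg f p u j := hf p q u j hpq hu hj

theorem monotone_exchange_step_general (hf : OrthantSubmodular f) (hmono : KMonotone f)
    {ε w : ℝ} (hε : ε < 1) {p q : E → Fin (k + 1)} (hpq : kLE p q)
    {e u : E} (he : q e = 0) (hu : q u = 0) {i j : Fin (k + 1)} (hj : j ≠ 0)
    (hw : w ≤ marg f p e i) (hgain : marg f p u j < w / (1 - ε)) :
    f (Function.update q u j) - f (Function.update q e i) < (1 / (1 - ε)) * marg f p e i :=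
  have hε' : 0 ≤ 1 - ε := sub_nonneg.2 hε.le
  calc f (Function.update q u j) - f (Function.update q e i)
      ≤ marg f p u j := hf.update_sub_update_le_marg hmono hpq he hu i hj
    _ < w / (1 - ε) := hgain
    _ ≤ marg f p e i / (1 - ε) := div_le_div_of_nonneg_right hw hε'
    _ = (1 / (1 - ε)) * marg f p e i := (one_div_mul_eq_div _ _).symm

end MarginalGains

/-- Claim 1, monotone case: per-step exchange inequality. -/
theorem monotone_exchange_step
    {E : Type*} [Fintype E] [DecidableEq E] {k : ℕ} (hk : 1 ≤ k)
    (f : (E → Fin (k+1)) → ℝ) (hf : IsKSubmodular f) (hmono : KMonotone f)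
    (ε w : ℝ) (hε : ε ∈ Set.Ioo (0 : ℝ) 1)
    (p q : E → Fin (k+1)) (hpq : kLE p q)
    (e u : E) (he : q e = 0) (hu : q u = 0)
    (i j : Fin (k+1)) (hi : i ≠ 0) (hj : j ≠ 0)
    (h1 : w ≤ marg f p e i) (h2 : marg f p u j < w / (1 - ε)) :
    f (Function.update q u j) - f (Function.update q e i)
      < (1 / (1 - ε)) * marg f p e i :=
  monotone_exchange_step_general hf.orthantSubmodular hmono hε.2 hpq he hu hj h1 h2
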